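/- Let (X, μ) be a standard Borel probability space and let T be an invertible measure-preserving transformation of (X, μ) with purely discrete spectrum (the eigenfunctions of the Koopman operator U_T f = f ∘ T span a dense subspace of L²(X, μ)). Then for every admissible summable semimetric ρ on X, the orbit {ρ_n : n ∈ ℕ}, where ρ_n(x,y) = ρ(T^n x, T^n y), is precompact in L¹(X×X, μ×μ), and hence also precompact in the m-norm; moreover, for every ε>0 the ε-entropies of all finite convex combinations of semimetrics in this orbit are uniformly bounded. -/

import Mathlib

open MeasureTheory Filter Function Set
open scoped ENNReal

/-- A semimetric on `X`: a nonnegative function vanishing on the diagonal, symmetric and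
satisfying the triangle inequality for all points. -/
def IsSemimetric {X : Type*} (ρ : X → X → ℝ) : Prop :=
  (∀ x y, 0 ≤ ρ x y) ∧ (∀ x, ρ x x = 0) ∧ (∀ x y, ρ x y = ρ y x) ∧
    ∀ x y z, ρ x z ≤ ρ x y + ρ y z

/-- A metric on `X`: a semimetric that separates points. -/
def IsMetricFun {X : Type*} (ρ : X → X → ℝ) : Prop :=
  IsSemimetric ρ ∧ ∀ x y, ρ x y = 0 ↔ x = y

/-- The semimetric space `(S, ρ)` is separable. -/
def SeparableOn {X : Type*} (ρ : X → X → ℝ) (S : Set X) : Prop :=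
  ∃ D : Set X, D ⊆ S ∧ D.Countable ∧ ∀ x ∈ S, ∀ ε : ℝ, 0 < ε → ∃ y ∈ D, ρ x y < ε

/-- A semimetric is admissible for `(X, μ)` if it is measurable on `(X × X, μ × μ)` and
separable on a subset of full measure. -/
def Admissible {X : Type*} [MeasurableSpace X] (μ : Measure X) (ρ : X → X → ℝ) : Prop :=
  Measurable (Function.uncurry ρ) ∧
    ∃ S : Set X, MeasurableSet S ∧ μ Sᶜ = 0 ∧ SeparableOn ρ S

/-- An `ε`-cover of size `k`: `X = X₀ ∪ X₁ ∪ ⋯ ∪ X_k` with `μ(X₀) < ε` and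
`diam_ρ(X_j) < ε` for `j = 1, …, k`. -/
def IsEpsCover {X : Type*} [MeasurableSpace X] (μ : Measure X) (ρ : X → X → ℝ)
    (ε : ℝ) (k : ℕ) : Prop :=
  ∃ A : Fin (k + 1) → Set X, (∀ i, MeasurableSet (A i)) ∧ (⋃ i, A i) = Set.univ ∧
    μ (A 0) < ENNReal.ofReal ε ∧
    ∀ i, i ≠ 0 → ∀ x ∈ A i, ∀ y ∈ A i, ρ x y < ε

/-- The `ε`-entropy of `(X, μ, ρ)`: the binary logarithm of the smallest size of an
`ε`-cover, and `∞` if there is no finite `ε`-cover. -/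
noncomputable def epsEntropy {X : Type*} [MeasurableSpace X] (μ : Measure X)
    (ρ : X → X → ℝ) (ε : ℝ) : ℝ≥0∞ :=
  sInf {h : ℝ≥0∞ | ∃ k : ℕ, IsEpsCover μ ρ ε k ∧ h = ENNReal.ofReal (Real.logb 2 k)}

/-- The m-norm of `f`: the infimum of the `L¹`-norms of measurable semimetrics
dominating `|f|` almost everywhere (`∞` if there is no such semimetric). -/
noncomputable def mnorm {X : Type*} [MeasurableSpace X] (μ : Measure X)
    (f : X → X → ℝ) : ℝ≥0∞ :=
  sInf {c : ℝ≥0∞ | ∃ ρ : X → X → ℝ, IsSemimetric ρ ∧ Measurable (Function.uncurry ρ) ∧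
    (∀ᵐ p ∂(μ.prod μ), |f p.1 p.2| ≤ ρ p.1 p.2) ∧
    c = ∫⁻ p, ENNReal.ofReal (ρ p.1 p.2) ∂(μ.prod μ)}

/-- The m-distance between two functions. -/
noncomputable def mdist {X : Type*} [MeasurableSpace X] (μ : Measure X)
    (f g : X → X → ℝ) : ℝ≥0∞ :=
  mnorm μ fun x y => f x y - g x y

/-- The `L¹(X × X, μ × μ)` distance between two functions. -/
noncomputable def L1dist {X : Type*} [MeasurableSpace X] (μ : Measure X)
    (f g : X → X → ℝ) : ℝ≥0∞ :=
  ∫⁻ p, ENNReal.ofReal |f p.1 p.2 - g p.1 p.2| ∂(μ.prod μ)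

/-- Total boundedness (precompactness) of a set of functions w.r.t. an extended distance. -/
def TotallyBoundedIn {X : Type*} (d : (X → X → ℝ) → (X → X → ℝ) → ℝ≥0∞)
    (M : Set (X → X → ℝ)) : Prop :=
  ∀ ε : ℝ≥0∞, 0 < ε → ∃ T : Set (X → X → ℝ), T.Finite ∧ ∀ f ∈ M, ∃ g ∈ T, d f g < ε

/-!
A finite combination of eigenfunctions has precompact orbit, and the vectors with precompact orbit
under an isometry form a closed subspace; discrete spectrum therefore makes every orbit precompact,
first in `L²(μ)`, then for products `f ⊗ g`, hence in all of `L¹(μ × μ)`.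

To pass from `L¹` to the m-norm, let `σ` be a semimetric that is `L¹`-close to `ρ`. Since `ρ` has
finite entropy, there are finitely many probability measures `P i ≤ K • μ` such that most points
have small mean `ρ`-distance to one of them. Let `g x` be the least mean `(ρ + σ)`-distance from
`x` to the `P i`, plus `K ^ 2 * ‖σ - ρ‖₁`. Averaging the quadrilateral inequality over `P i × P j`
gives `|σ x y - ρ x y| ≤ g x + g y`, so the semimetric `min ((ρ + σ) x y) (g x + g y)` dominates
`|σ - ρ|`, and its integral is small. How close is close enough depends on `ρ` only; comparing
`ρ_n` and `ρ_k` reduces to comparing `ρ_{n - k}` and `ρ` by invariance.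

A convex combination of the `ρ_n` is then m-close to one of finitely many representatives `ρ_k`,
which is dominated by the sum of these representatives, a semimetric of finite entropy.
-/

section AlmostPeriodic

lemma totallyBounded_image2_add {E : Type*} [SeminormedAddCommGroup E] {s t : Set E}
    (hs : TotallyBounded s) (ht : TotallyBounded t) : TotallyBounded (image2 (· + ·) s t) := by
  rw [EMetric.totallyBounded_iff] at *
  intro ε hε
  obtain ⟨a, ha, hsa⟩ := hs (ε / 2) (ENNReal.half_pos hε.ne')
  obtain ⟨b, hb, htb⟩ := ht (ε / 2) (ENNReal.half_pos hε.ne')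
  refine ⟨image2 (· + ·) a b, ha.image2 _ hb, ?_⟩
  rintro _ ⟨x, hx, y, hy, rfl⟩
  obtain ⟨x', hx', hxx'⟩ := mem_iUnion₂.1 (hsa hx)
  obtain ⟨y', hy', hyy'⟩ := mem_iUnion₂.1 (htb hy)
  refine mem_iUnion₂.2 ⟨x' + y', mem_image2_of_mem hx' hy', ?_⟩
  calc edist (x + y) (x' + y') ≤ edist x x' + edist y y' := edist_add_add_le _ _ _ _
    _ < ε / 2 + ε / 2 := ENNReal.add_lt_add hxx' hyy'
    _ = ε := ENNReal.add_halves ε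

variable {𝕜 E : Type*} [NormedField 𝕜] [NormedAddCommGroup E] [NormedSpace 𝕜 E]

/-- The vectors with precompact orbit under a linear isometry (precompactness is encoded as total
boundedness, which agrees with it in a complete space). -/
def almostPeriodicVectors (U : E →ₗᵢ[𝕜] E) : Submodule 𝕜 E where
  carrier := {f | TotallyBounded (range fun n : ℕ => (U ^ n) f)}
  add_mem' {f g} hf hg := by
    refine (totallyBounded_image2_add hf hg).subset (range_subset_iff.2 fun n => ?_)
    exact ⟨_, ⟨n, rfl⟩, _, ⟨n, rfl⟩, (map_add (U ^ n) f g).symm⟩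
  zero_mem' := (totallyBounded_singleton 0).subset <| range_subset_iff.2 fun n => map_zero (U ^ n)
  smul_mem' c f hf := by
    refine (hf.image (uniformContinuous_const_smul c)).subset (range_subset_iff.2 fun n => ?_)
    exact ⟨_, ⟨n, rfl⟩, ((U ^ n).map_smul c f).symm⟩

variable {U : E →ₗᵢ[𝕜] E}

lemma mem_almostPeriodicVectors {f : E} :
    f ∈ almostPeriodicVectors U ↔ TotallyBounded (range fun n : ℕ => (U ^ n) f) :=
  Iff.rfl

lemma isClosed_almostPeriodicVectors : IsClosed (almostPeriodicVectors U : Set E) := by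
  refine isClosed_of_closure_subset fun f hf => EMetric.totallyBounded_iff.2 fun ε hε => ?_
  have hε2 := ENNReal.half_pos hε.ne'
  obtain ⟨g, hg, hfg⟩ := EMetric.mem_closure_iff.1 hf (ε / 2) hε2
  obtain ⟨t, ht, hgt⟩ := EMetric.totallyBounded_iff.1 hg (ε / 2) hε2
  refine ⟨t, ht, range_subset_iff.2 fun n => ?_⟩
  obtain ⟨y, hy, hgy⟩ := mem_iUnion₂.1 (hgt ⟨n, rfl⟩)
  refine mem_iUnion₂.2 ⟨y, hy, ?_⟩
  calc edist ((U ^ n) f) y ≤ edist ((U ^ n) f) ((U ^ n) g) + edist ((U ^ n) g) y :=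
        edist_triangle _ _ _
    _ < ε / 2 + ε / 2 := ENNReal.add_lt_add (by rwa [(U ^ n).isometry.edist_eq]) hgy
    _ = ε := ENNReal.add_halves ε

lemma mem_almostPeriodicVectors_of_apply_eq_smul [ProperSpace 𝕜] {f : E} {c : 𝕜}
    (hf : U f = c • f) : f ∈ almostPeriodicVectors U := by
  rcases eq_or_ne f 0 with rfl | hf0
  · exact zero_mem _
  have hc : ‖c‖ = 1 := by
    have h := U.norm_map f
    rwa [hf, norm_smul, mul_eq_right₀ (norm_ne_zero_iff.2 hf0)] at h
  have hpow (n : ℕ) : (U ^ n) f = c ^ n • f := by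
    induction n with
    | zero => simp
    | succ n ih =>
      rw [pow_succ, LinearIsometry.coe_mul, comp_apply, hf, LinearIsometry.map_smul, ih,
        smul_smul, ← pow_succ']
  have hK : IsCompact ((· • f) '' Metric.closedBall (0 : 𝕜) 1) :=
    (isCompact_closedBall 0 1).image (by fun_prop)
  refine hK.totallyBounded.subset (range_subset_iff.2 fun n => ?_)
  exact ⟨c ^ n, by simp [hc], (hpow n).symm⟩

end AlmostPeriodic

section Tensor

variable {𝕜 X Y : Type*} [RCLike 𝕜] [MeasurableSpace X] [MeasurableSpace Y]
  {μ : Measure X} {ν : Measure Y} [IsProbabilityMeasure μ] [IsProbabilityMeasure ν]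
  {p q r : ℝ≥0∞} [Fact (1 ≤ p)] [Fact (1 ≤ q)] [Fact (1 ≤ r)] [ENNReal.HolderTriple p q r]

variable (𝕜 μ ν p q r) in
/-- The bilinear map `(f, g) ↦ f ⊗ g`, where `(f ⊗ g) (x, y) = f x * g y`. -/
noncomputable def tensorLp : Lp 𝕜 p μ →L[𝕜] Lp 𝕜 q ν →L[𝕜] Lp 𝕜 r (μ.prod ν) :=
  ((ContinuousLinearMap.mul 𝕜 𝕜).holderL (μ.prod ν) p q r).bilinearComp
    (Lp.compMeasurePreservingₗᵢ 𝕜 Prod.fst measurePreserving_fst).toContinuousLinearMap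
    (Lp.compMeasurePreservingₗᵢ 𝕜 Prod.snd measurePreserving_snd).toContinuousLinearMap

lemma coeFn_tensorLp (f : Lp 𝕜 p μ) (g : Lp 𝕜 q ν) :
    tensorLp 𝕜 μ ν p q r f g =ᵐ[μ.prod ν] fun z => f z.1 * g z.2 := by
  filter_upwards [ContinuousLinearMap.coeFn_holder (r := r) (ContinuousLinearMap.mul 𝕜 𝕜)
      (Lp.compMeasurePreserving Prod.fst measurePreserving_fst f)
      (Lp.compMeasurePreserving Prod.snd measurePreserving_snd g),
    Lp.coeFn_compMeasurePreserving f (measurePreserving_fst (μ := μ) (ν := ν)),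
    Lp.coeFn_compMeasurePreserving g (measurePreserving_snd (μ := μ) (ν := ν))] with z h h₁ h₂
  refine h.trans ?_
  rw [h₁, h₂]
  rfl

lemma compMeasurePreserving_tensorLp {S : X → X} {T : Y → Y} (hS : MeasurePreserving S μ μ)
    (hT : MeasurePreserving T ν ν) (f : Lp 𝕜 p μ) (g : Lp 𝕜 q ν) :
    Lp.compMeasurePreserving (Prod.map S T) (hS.prod hT) (tensorLp 𝕜 μ ν p q r f g) =
      tensorLp 𝕜 μ ν p q r (Lp.compMeasurePreserving S hS f)
        (Lp.compMeasurePreserving T hT g) := by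
  apply Lp.ext
  filter_upwards [Lp.coeFn_compMeasurePreserving (tensorLp 𝕜 μ ν p q r f g) (hS.prod hT),
    (hS.prod hT).quasiMeasurePreserving.ae (coeFn_tensorLp (r := r) f g),
    coeFn_tensorLp (r := r) (Lp.compMeasurePreserving S hS f) (Lp.compMeasurePreserving T hT g),
    measurePreserving_fst.quasiMeasurePreserving.ae (Lp.coeFn_compMeasurePreserving f hS),
    measurePreserving_snd.quasiMeasurePreserving.ae (Lp.coeFn_compMeasurePreserving g hT)]
    with z h₁ h₂ h₃ h₄ h₅
  rw [h₁, h₃, h₄, h₅]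
  exact h₂

lemma tensorLp_indicatorConstLp {s : Set X} {t : Set Y} (hs : MeasurableSet s)
    (ht : MeasurableSet t) :
    tensorLp 𝕜 μ ν p q r (indicatorConstLp p hs (measure_ne_top μ s) 1)
        (indicatorConstLp q ht (measure_ne_top ν t) 1) =
      indicatorConstLp r (hs.prod ht) (measure_ne_top (μ.prod ν) _) 1 := by
  apply Lp.ext
  filter_upwards [coeFn_tensorLp (r := r) (indicatorConstLp p hs (measure_ne_top μ s) (1 : 𝕜))
      (indicatorConstLp q ht (measure_ne_top ν t) 1),
    measurePreserving_fst.quasiMeasurePreserving.ae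
      (indicatorConstLp_coeFn (p := p) (hs := hs) (hμs := measure_ne_top μ s) (c := (1 : 𝕜))),
    measurePreserving_snd.quasiMeasurePreserving.ae
      (indicatorConstLp_coeFn (p := q) (hs := ht) (hμs := measure_ne_top ν t) (c := (1 : 𝕜))),
    indicatorConstLp_coeFn (p := r) (hs := hs.prod ht) (hμs := measure_ne_top (μ.prod ν) _)
      (c := (1 : 𝕜))] with z h h₁ h₂ h₃
  rw [h, h₁, h₂, h₃]
  by_cases hz₁ : z.1 ∈ s <;> by_cases hz₂ : z.2 ∈ t <;> simp [indicator, hz₁, hz₂]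

end Tensor

section IndicatorDensity

lemma measurableSet_accumulate {X : Type*} [MeasurableSpace X] {A : ℕ → Set X}
    (hA : ∀ i, MeasurableSet (A i)) (n : ℕ) : MeasurableSet (accumulate A n) :=
  MeasurableSet.biUnion (to_countable _) fun i _ => hA i

lemma tendsto_measure_iUnion_sdiff_accumulate {X : Type*} [MeasurableSpace X] {μ : Measure X}
    [IsFiniteMeasure μ] {A : ℕ → Set X} (hA : ∀ i, MeasurableSet (A i)) :
    Tendsto (fun n => μ ((⋃ i, A i) \ accumulate A n)) atTop (nhds 0) := by
  have hdiff (n : ℕ) : μ ((⋃ i, A i) \ accumulate A n) = μ (⋃ i, A i) - μ (accumulate A n) :=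
    measure_sdiff (accumulate_subset_iUnion n)
      (measurableSet_accumulate hA n).nullMeasurableSet (measure_ne_top μ _)
  simp only [hdiff]
  simpa only [tsub_self] using ENNReal.Tendsto.sub
    (tendsto_const_nhds (x := μ (⋃ i, A i)))
    (tendsto_measure_iUnion_accumulate (μ := μ) (f := A)) (Or.inl (measure_ne_top μ _))

variable {𝕜 Z : Type*} [RCLike 𝕜] [mZ : MeasurableSpace Z] {ν : Measure Z}
  [IsFiniteMeasure ν] {p : ℝ≥0∞} {V : Submodule 𝕜 (Lp 𝕜 p ν)}

lemma indicatorConstLp_compl_mem {A : Set Z} (hA : MeasurableSet A)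
    (huniv : indicatorConstLp p MeasurableSet.univ (measure_ne_top ν _) 1 ∈ V)
    (hmem : indicatorConstLp p hA (measure_ne_top ν _) 1 ∈ V) :
    indicatorConstLp p hA.compl (measure_ne_top ν _) 1 ∈ V := by
  have hsum := indicatorConstLp_disjoint_union (p := p) hA hA.compl (measure_ne_top ν _)
    (measure_ne_top ν _) disjoint_compl_right (1 : 𝕜)
  simp only [union_compl_self] at hsum
  exact (V.add_mem_iff_right hmem).1 (hsum ▸ huniv)

variable [Fact (1 ≤ p)]

lemma indicatorConstLp_iUnion_mem (hp : p ≠ ∞) (hV : IsClosed (V : Set (Lp 𝕜 p ν)))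
    {A : ℕ → Set Z} (hdisj : Pairwise (Disjoint on A)) (hA : ∀ i, MeasurableSet (A i))
    (hmem : ∀ i, indicatorConstLp p (hA i) (measure_ne_top ν _) 1 ∈ V) :
    indicatorConstLp p (MeasurableSet.iUnion hA) (measure_ne_top ν _) 1 ∈ V := by
  have hacc (n : ℕ) :
      indicatorConstLp p (measurableSet_accumulate hA n) (measure_ne_top ν _) 1 ∈ V := by
    induction n with
    | zero => simpa only [accumulate_zero_nat] using hmem 0
    | succ n ih =>
      simp only [accumulate_succ]
      rw [indicatorConstLp_disjoint_union (measurableSet_accumulate hA n) (hA (n + 1))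
        (measure_ne_top ν _) (measure_ne_top ν _) (disjoint_accumulate hdisj n.lt_succ_self)]
      exact V.add_mem ih (hmem (n + 1))
  have htendsto : Tendsto (fun n => ν (symmDiff (accumulate A n) (⋃ i, A i))) atTop (nhds 0) := by
    simpa only [symmDiff_of_le (accumulate_subset_iUnion _)]
      using tendsto_measure_iUnion_sdiff_accumulate hA
  exact hV.mem_of_tendsto (tendsto_indicatorConstLp_set hp htendsto) (Eventually.of_forall hacc)

lemma eq_top_of_indicatorConstLp_mem (hp : p ≠ ∞) (hV : IsClosed (V : Set (Lp 𝕜 p ν)))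
    {C : Set (Set Z)} (hgen : mZ = MeasurableSpace.generateFrom C) (hpi : IsPiSystem C)
    (huniv : univ ∈ C)
    (hmem : ∀ s (hs : MeasurableSet s), s ∈ C →
      indicatorConstLp p hs (measure_ne_top ν s) 1 ∈ V) : V = ⊤ := by
  have hind (s : Set Z) (hs : MeasurableSet s) :
      indicatorConstLp p hs (measure_ne_top ν s) 1 ∈ V := by
    induction s, hs using MeasurableSpace.induction_on_inter hgen hpi with
    | empty => rw [indicatorConstLp_empty]; exact V.zero_mem
    | basic t ht => exact hmem t _ ht
    | compl t ht ih => exact indicatorConstLp_compl_mem ht (hmem univ _ huniv) ih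
    | iUnion A hdisj hA ih => exact indicatorConstLp_iUnion_mem hp hV hdisj hA ih
  refine V.eq_top_iff'.2 fun f => ?_
  induction f using Lp.induction hp with
  | @indicatorConst c s hs hνs =>
    rw [Lp.simpleFunc.coe_indicatorConst]
    have hsmul : indicatorConstLp p hs hνs.ne c = c • indicatorConstLp p hs hνs.ne (1 : 𝕜) := by
      rw [indicatorConstLp, indicatorConstLp, ← MemLp.toLp_const_smul]
      congr 1 with z
      by_cases hz : z ∈ s <;> simp [hz]
    exact hsmul ▸ V.smul_mem c (hind _ hs)
  | add hf hg _ hfV hgV => exact V.add_mem hfV hgV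
  | isClosed => exact hV

end IndicatorDensity

section DiscreteSpectrum

lemma apply_mem_of_dense_span {𝕜 E F : Type*} [NormedField 𝕜] [NormedAddCommGroup E]
    [NormedSpace 𝕜 E] [NormedAddCommGroup F] [NormedSpace 𝕜 F] (L : E →L[𝕜] F) {s : Set E}
    (hs : Dense (Submodule.span 𝕜 s : Set E)) {V : Submodule 𝕜 F} (hV : IsClosed (V : Set F))
    (h : ∀ f ∈ s, L f ∈ V) (f : E) : L f ∈ V :=
  (hV.preimage L.continuous).closure_subset_iff.2
    ((Submodule.span_le (p := V.comap L.toLinearMap)).2 h) (hs f)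

/-- A linear isometry has discrete spectrum if its eigenvectors span a dense subspace. -/
def HasDiscreteSpectrum {𝕜 E : Type*} [NormedField 𝕜] [NormedAddCommGroup E] [NormedSpace 𝕜 E]
    (U : E →ₗᵢ[𝕜] E) : Prop :=
  Dense (Submodule.span 𝕜 {f : E | ∃ c : 𝕜, U f = c • f} : Set E)

variable {𝕜 X Y : Type*} [RCLike 𝕜] [MeasurableSpace X] [MeasurableSpace Y]
  {μ : Measure X} {ν : Measure Y} [IsProbabilityMeasure μ] [IsProbabilityMeasure ν]
  {p q r : ℝ≥0∞} [Fact (1 ≤ p)] [Fact (1 ≤ q)] [Fact (1 ≤ r)] [ENNReal.HolderTriple p q r]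
  {S : X → X} {T : Y → Y} {hS : MeasurePreserving S μ μ} {hT : MeasurePreserving T ν ν}

lemma tensorLp_mem_almostPeriodicVectors
    (hSspec : HasDiscreteSpectrum (Lp.compMeasurePreservingₗᵢ 𝕜 S hS : Lp 𝕜 p μ →ₗᵢ[𝕜] Lp 𝕜 p μ))
    (hTspec : HasDiscreteSpectrum (Lp.compMeasurePreservingₗᵢ 𝕜 T hT : Lp 𝕜 q ν →ₗᵢ[𝕜] Lp 𝕜 q ν))
    (f : Lp 𝕜 p μ) (g : Lp 𝕜 q ν) :
    tensorLp 𝕜 μ ν p q r f g ∈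
      almostPeriodicVectors (Lp.compMeasurePreservingₗᵢ 𝕜 (Prod.map S T) (hS.prod hT)) := by
  refine apply_mem_of_dense_span (tensorLp 𝕜 μ ν p q r f) hTspec isClosed_almostPeriodicVectors ?_ g
  rintro g ⟨d, hg⟩
  refine apply_mem_of_dense_span ((tensorLp 𝕜 μ ν p q r).flip g) hSspec
    isClosed_almostPeriodicVectors ?_ f
  rintro f ⟨c, hf⟩
  refine mem_almostPeriodicVectors_of_apply_eq_smul (c := d * c) ?_
  calc Lp.compMeasurePreserving (Prod.map S T) (hS.prod hT) (tensorLp 𝕜 μ ν p q r f g)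
      = tensorLp 𝕜 μ ν p q r (c • f) (d • g) := by
        rw [compMeasurePreserving_tensorLp, ← hf, ← hg]; rfl
    _ = (d * c) • tensorLp 𝕜 μ ν p q r f g := by
        rw [map_smul, map_smul, smul_apply, smul_smul]

theorem almostPeriodicVectors_prodMap_eq_top (hr : r ≠ ∞)
    (hSspec : HasDiscreteSpectrum (Lp.compMeasurePreservingₗᵢ 𝕜 S hS : Lp 𝕜 p μ →ₗᵢ[𝕜] Lp 𝕜 p μ))
    (hTspec : HasDiscreteSpectrum (Lp.compMeasurePreservingₗᵢ 𝕜 T hT : Lp 𝕜 q ν →ₗᵢ[𝕜] Lp 𝕜 q ν)) :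
    almostPeriodicVectors (Lp.compMeasurePreservingₗᵢ 𝕜 (Prod.map S T) (hS.prod hT) :
      Lp 𝕜 r (μ.prod ν) →ₗᵢ[𝕜] Lp 𝕜 r (μ.prod ν)) = ⊤ := by
  refine eq_top_of_indicatorConstLp_mem hr isClosed_almostPeriodicVectors generateFrom_prod.symm
    isPiSystem_prod ⟨univ, .univ, univ, .univ, univ_prod_univ⟩ ?_
  rintro _ _ ⟨s, hs, t, ht, rfl⟩
  rw [← tensorLp_indicatorConstLp (p := p) (q := q) hs ht]
  exact tensorLp_mem_almostPeriodicVectors hSspec hTspec _ _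

end DiscreteSpectrum

section L1Orbit

variable {𝕜 X : Type*} [RCLike 𝕜] [MeasurableSpace X] {μ : Measure X} {T : X → X}

lemma exists_finite_edist_lt {ι E : Type*} [PseudoEMetricSpace E] {u : ι → E}
    (hu : TotallyBounded (range u)) {ε : ℝ≥0∞} (hε : 0 < ε) :
    ∃ s : Set ι, s.Finite ∧ ∀ i, ∃ j ∈ s, edist (u i) (u j) < ε := by
  have h := EMetric.totallyBounded_iff'.1 hu ε hε
  rw [← image_univ, exists_subset_image_finite_and] at h
  obtain ⟨s, -, hs, hcover⟩ := h
  refine ⟨s, hs, fun i => ?_⟩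
  simpa using hcover (mem_image_of_mem u (mem_univ i))

lemma L1dist_comm (f g : X → X → ℝ) : L1dist μ f g = L1dist μ g f := by
  simp only [L1dist, abs_sub_comm]

lemma L1dist_onFun [SFinite μ] (hT : MeasurePreserving T μ μ) {f g : X → X → ℝ}
    (hf : Measurable (uncurry f)) (hg : Measurable (uncurry g)) :
    L1dist μ (f on T) (g on T) = L1dist μ f g :=
  (hT.prod hT).lintegral_comp (f := fun p => ENNReal.ofReal |f p.1 p.2 - g p.1 p.2|)
    (hf.sub hg).abs.ennreal_ofReal

lemma edist_toLp_ofReal {f g : X → X → ℝ}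
    (hf : MemLp (fun z => ((uncurry f z : ℝ) : 𝕜)) 1 (μ.prod μ))
    (hg : MemLp (fun z => ((uncurry g z : ℝ) : 𝕜)) 1 (μ.prod μ)) :
    edist (hf.toLp _) (hg.toLp _) = L1dist μ f g := by
  rw [Lp.edist_toLp_toLp, eLpNorm_one_eq_lintegral_enorm, L1dist]
  refine lintegral_congr fun z => ?_
  rw [Pi.sub_apply, ← RCLike.ofReal_sub, ← ofReal_norm, RCLike.norm_ofReal]
  rfl

theorem exists_finite_L1dist_lt [IsProbabilityMeasure μ] (hT : MeasurePreserving T μ μ)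
    (hspec : HasDiscreteSpectrum (Lp.compMeasurePreservingₗᵢ 𝕜 T hT : Lp 𝕜 2 μ →ₗᵢ[𝕜] Lp 𝕜 2 μ))
    {f : X → X → ℝ} (hf : Integrable (uncurry f) (μ.prod μ)) {ε : ℝ≥0∞} (hε : 0 < ε) :
    ∃ s : Set ℕ, s.Finite ∧ ∀ n, ∃ k ∈ s, L1dist μ (f on T^[n]) (f on T^[k]) < ε := by
  have hF : MemLp (fun z => ((uncurry f z : ℝ) : 𝕜)) 1 (μ.prod μ) :=
    memLp_one_iff_integrable.2 hf.ofReal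
  have hFn (n : ℕ) : MemLp (fun z => ((uncurry (f on T^[n]) z : ℝ) : 𝕜)) 1 (μ.prod μ) :=
    hF.comp_measurePreserving ((hT.iterate n).prod (hT.iterate n))
  have hpow (n : ℕ) : (Lp.compMeasurePreservingₗᵢ 𝕜 (Prod.map T T) (hT.prod hT) ^ n)
      (hF.toLp _) = (hFn n).toLp _ := by
    have hiter : (Prod.map T T)^[n] = Prod.map T^[n] T^[n] := Prod.map_iterate T T n
    rw [LinearIsometry.coe_pow]
    calc (Lp.compMeasurePreserving (Prod.map T T) (hT.prod hT))^[n] (hF.toLp _)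
        = Lp.compMeasurePreserving (Prod.map T T)^[n] ((hT.prod hT).iterate n) (hF.toLp _) := by
          rw [Lp.compMeasurePreserving_iterate]
      _ = (hFn n).toLp _ := by
          simp only [hiter]
          rfl
  have htop := almostPeriodicVectors_prodMap_eq_top ENNReal.one_ne_top hspec hspec
  have hmem := mem_almostPeriodicVectors.1 (htop ▸ Submodule.mem_top (x := hF.toLp _))
  simpa only [hpow, edist_toLp_ofReal] using exists_finite_edist_lt hmem hε

end L1Orbit

section EpsCover

variable {X : Type*} [MeasurableSpace X] {μ : Measure X} {ρ σ : X → X → ℝ} {ε : ℝ} {k : ℕ}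

lemma isEpsCover_iff :
    IsEpsCover μ ρ ε k ↔ ∃ B : Fin k → Set X, (∀ i, MeasurableSet (B i)) ∧
      μ (⋃ i, B i)ᶜ < ENNReal.ofReal ε ∧ ∀ i, ∀ x ∈ B i, ∀ y ∈ B i, ρ x y < ε := by
  constructor
  · rintro ⟨A, hA, hcover, hA0, hdiam⟩
    refine ⟨fun i => A i.succ, fun i => hA _, (measure_mono fun x hx => ?_).trans_lt hA0,
      fun i => hdiam _ i.succ_ne_zero⟩
    obtain ⟨i, hi⟩ := mem_iUnion.1 (hcover.symm ▸ mem_univ x)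
    induction i using Fin.cases with
    | zero => exact hi
    | succ i => exact absurd (mem_iUnion_of_mem i hi) hx
  · rintro ⟨B, hB, hB0, hdiam⟩
    refine ⟨Fin.cons (⋃ i, B i)ᶜ B, Fin.cases (MeasurableSet.iUnion hB).compl hB, ?_, hB0,
      Fin.cases (absurd rfl) fun i _ => hdiam i⟩
    rw [eq_univ_iff_forall]
    intro x
    by_cases hx : x ∈ ⋃ i, B i
    · obtain ⟨i, hi⟩ := mem_iUnion.1 hx
      exact mem_iUnion_of_mem i.succ hi
    · exact mem_iUnion_of_mem 0 hx

lemma isEpsCover_card {ι : Type*} [Fintype ι] {B : ι → Set X} (hB : ∀ i, MeasurableSet (B i))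
    (hcover : μ (⋃ i, B i)ᶜ < ENNReal.ofReal ε)
    (hdiam : ∀ i, ∀ x ∈ B i, ∀ y ∈ B i, ρ x y < ε) : IsEpsCover μ ρ ε (Fintype.card ι) := by
  let e := (Fintype.equivFin ι).symm
  refine isEpsCover_iff.2 ⟨B ∘ e, fun i => hB _, ?_, fun i => hdiam _⟩
  rwa [show ⋃ i, (B ∘ e) i = ⋃ i, B i from e.surjective.iUnion_comp B]

lemma IsEpsCover.mono (h : IsEpsCover μ σ ε k) (hρσ : ∀ x y, ρ x y ≤ σ x y) :
    IsEpsCover μ ρ ε k := by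
  obtain ⟨A, hA, hcover, hA0, hdiam⟩ := h
  exact ⟨A, hA, hcover, hA0, fun i hi x hx y hy => (hρσ x y).trans_lt (hdiam i hi x hx y hy)⟩

lemma IsEpsCover.onFun (h : IsEpsCover μ ρ ε k) {T : X → X} (hT : MeasurePreserving T μ μ) :
    IsEpsCover μ (ρ on T) ε k := by
  obtain ⟨A, hA, hcover, hA0, hdiam⟩ := h
  refine ⟨fun i => T ⁻¹' A i, fun i => hT.measurable (hA i), ?_, ?_,
    fun i hi x hx y hy => hdiam i hi _ hx _ hy⟩
  · rw [← preimage_iUnion, hcover, preimage_univ]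
  · rwa [hT.measure_preimage (hA 0).nullMeasurableSet]

lemma IsEpsCover.add {δ : ℝ} {l : ℕ} (hρ : IsEpsCover μ ρ ε k) (hσ : IsEpsCover μ σ δ l) :
    IsEpsCover μ (fun x y => ρ x y + σ x y) (ε + δ) (k * l) := by
  obtain ⟨B, hB, hB0, hBdiam⟩ := isEpsCover_iff.1 hρ
  obtain ⟨C, hC, hC0, hCdiam⟩ := isEpsCover_iff.1 hσ
  have hε : 0 < ε := ENNReal.ofReal_pos.1 (pos_of_gt hB0)
  have hδ : 0 < δ := ENNReal.ofReal_pos.1 (pos_of_gt hC0)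
  have hcompl : (⋃ i : Fin k × Fin l, B i.1 ∩ C i.2)ᶜ = (⋃ i, B i)ᶜ ∪ (⋃ j, C j)ᶜ := by
    rw [iUnion_prod', ← compl_inter, iUnion_inter_iUnion]
  rw [show k * l = Fintype.card (Fin k × Fin l) by simp]
  refine isEpsCover_card (B := fun i : Fin k × Fin l => B i.1 ∩ C i.2)
    (fun i => (hB _).inter (hC _)) ?_
    fun i x hx y hy => add_lt_add (hBdiam _ x hx.1 y hy.1) (hCdiam _ x hx.2 y hy.2)
  rw [hcompl, ENNReal.ofReal_add hε.le hδ.le]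
  exact (measure_union_le _ _).trans_lt (ENNReal.add_lt_add hB0 hC0)

/-- All `ε`-entropies of the semimetric are finite. -/
def HasFiniteEntropy (μ : Measure X) (ρ : X → X → ℝ) : Prop :=
  ∀ ε : ℝ, 0 < ε → ∃ k : ℕ, IsEpsCover μ ρ ε k

lemma HasFiniteEntropy.onFun (h : HasFiniteEntropy μ ρ) {T : X → X}
    (hT : MeasurePreserving T μ μ) : HasFiniteEntropy μ (ρ on T) := fun ε hε =>
  (h ε hε).imp fun _ hk => hk.onFun hT

lemma HasFiniteEntropy.add (hρ : HasFiniteEntropy μ ρ) (hσ : HasFiniteEntropy μ σ) :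
    HasFiniteEntropy μ fun x y => ρ x y + σ x y := fun ε hε => by
  obtain ⟨k, hk⟩ := hρ (ε / 2) (half_pos hε)
  obtain ⟨l, hl⟩ := hσ (ε / 2) (half_pos hε)
  exact ⟨k * l, add_halves ε ▸ hk.add hl⟩

lemma hasFiniteEntropy_zero : HasFiniteEntropy μ fun _ _ => 0 := fun ε hε =>
  ⟨1, isEpsCover_iff.2
    ⟨fun _ => univ, fun _ => .univ, by simpa [iUnion_const] using hε, fun _ _ _ _ _ => hε⟩⟩

lemma hasFiniteEntropy_sum {ι : Type*} {ρ : ι → X → X → ℝ} (s : Finset ι)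
    (h : ∀ i ∈ s, HasFiniteEntropy μ (ρ i)) :
    HasFiniteEntropy μ fun x y => ∑ i ∈ s, ρ i x y := by
  classical
  induction s using Finset.induction_on with
  | empty => simpa only [Finset.sum_empty] using hasFiniteEntropy_zero
  | insert i s hi ih =>
    simp only [Finset.sum_insert hi]
    exact (h i (s.mem_insert_self i)).add (ih fun j hj => h j (Finset.mem_insert_of_mem hj))

lemma Admissible.hasFiniteEntropy [IsFiniteMeasure μ] (h : Admissible μ ρ)
    (hρ : IsSemimetric ρ) : HasFiniteEntropy μ ρ := by
  intro ε hε
  obtain ⟨hmeas, S, -, hS, D, -, hD, hdense⟩ := h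
  rcases isEmpty_or_nonempty X with hX | hX
  · exact ⟨0, isEpsCover_iff.2 ⟨finZeroElim, finZeroElim,
      by simpa [Set.eq_empty_of_isEmpty] using hε, finZeroElim⟩⟩
  obtain ⟨d, hd⟩ := countable_iff_exists_subset_range.1 hD
  let B (n : ℕ) : Set X := {x | ρ x (d n) < ε / 2}
  have hB (n : ℕ) : MeasurableSet (B n) :=
    measurableSet_lt (hmeas.comp measurable_prodMk_right) measurable_const
  have hBdiam (n : ℕ) : ∀ x ∈ B n, ∀ y ∈ B n, ρ x y < ε := by
    intro x hx y hy
    have htri := hρ.2.2.2 x (d n) y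
    rw [hρ.2.2.1 (d n) y] at htri
    linarith [show ρ x (d n) < ε / 2 from hx, show ρ y (d n) < ε / 2 from hy]
  have hBcover : S ⊆ ⋃ n, B n := by
    intro x hx
    obtain ⟨y, hy, hxy⟩ := hdense x hx (ε / 2) (half_pos hε)
    obtain ⟨n, rfl⟩ := hd hy
    exact mem_iUnion_of_mem n hxy
  obtain ⟨N, hN⟩ := ((tendsto_measure_iUnion_sdiff_accumulate (μ := μ) hB).eventually
    (gt_mem_nhds (ENNReal.ofReal_pos.2 hε))).exists
  refine ⟨N + 1, isEpsCover_iff.2 ⟨fun i => B i, fun i => hB i, ?_, fun i => hBdiam i⟩⟩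
  calc μ (⋃ i : Fin (N + 1), B i)ᶜ ≤ μ (Sᶜ ∪ ((⋃ i, B i) \ accumulate B N)) := by
        refine measure_mono fun x hx => or_iff_not_imp_left.2 fun hxS =>
          ⟨hBcover (not_notMem.1 hxS), fun hacc => hx ?_⟩
        obtain ⟨i, hi, hxi⟩ := mem_accumulate.1 hacc
        exact mem_iUnion_of_mem ⟨i, Nat.lt_succ_of_le hi⟩ hxi
    _ ≤ μ Sᶜ + μ ((⋃ i, B i) \ accumulate B N) := measure_union_le _ _
    _ < ENNReal.ofReal ε := by rwa [hS, zero_add]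

end EpsCover

section MClose

variable {X : Type*} {ρ σ τ : X → X → ℝ}

lemma IsSemimetric.onFun (h : IsSemimetric ρ) (T : X → X) : IsSemimetric (ρ on T) :=
  ⟨fun _ _ => h.1 _ _, fun _ => h.2.1 _, fun _ _ => h.2.2.1 _ _, fun _ _ _ => h.2.2.2 _ _ _⟩

lemma IsSemimetric.add (hρ : IsSemimetric ρ) (hσ : IsSemimetric σ) : IsSemimetric (ρ + σ) :=
  ⟨fun x y => add_nonneg (hρ.1 x y) (hσ.1 x y),
    fun x => by simp only [Pi.add_apply, hρ.2.1, hσ.2.1, add_zero],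
    fun x y => congrArg₂ (· + ·) (hρ.2.2.1 x y) (hσ.2.2.1 x y),
    fun x y z => (add_le_add (hρ.2.2.2 x y z) (hσ.2.2.2 x y z)).trans_eq
      (add_add_add_comm _ _ _ _)⟩

lemma isSemimetric_sum_mul {ι : Type*} [Fintype ι] {ρ : ι → X → X → ℝ} {w : ι → ℝ}
    (hw : ∀ i, 0 ≤ w i) (hρ : ∀ i, IsSemimetric (ρ i)) :
    IsSemimetric fun x y => ∑ i, w i * ρ i x y := by
  refine ⟨fun x y => Finset.sum_nonneg fun i _ => mul_nonneg (hw i) ((hρ i).1 x y),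
    fun x => by simp [(hρ _).2.1 x], fun x y => by simp only [(hρ _).2.2.1 x y], fun x y z => ?_⟩
  simp only [← Finset.sum_add_distrib, ← mul_add]
  exact Finset.sum_le_sum fun i _ => mul_le_mul_of_nonneg_left ((hρ i).2.2.2 x y z) (hw i)

variable [MeasurableSpace X] {μ : Measure X} {ε : ℝ≥0∞}

/-- Closeness in the m-norm, witnessed by a semimetric of integral at most `ε`. The witness
dominates the difference everywhere, not just almost everywhere, so that `IsEpsCover`, which is
sensitive to null sets, can be transferred along it. -/
def MClose (μ : Measure X) (ε : ℝ≥0∞) (ρ σ : X → X → ℝ) : Prop :=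
  ∃ r : X → X → ℝ, IsSemimetric r ∧ Measurable (uncurry r) ∧
    (∀ x y, |ρ x y - σ x y| ≤ r x y) ∧ ∫⁻ p, ENNReal.ofReal (r p.1 p.2) ∂(μ.prod μ) ≤ ε

lemma MClose.mono {δ : ℝ≥0∞} (h : MClose μ δ ρ σ) (hδε : δ ≤ ε) : MClose μ ε ρ σ := by
  obtain ⟨r, hr, hrm, hle, hint⟩ := h
  exact ⟨r, hr, hrm, hle, hint.trans hδε⟩

lemma MClose.symm (h : MClose μ ε ρ σ) : MClose μ ε σ ρ := by
  simpa only [MClose, abs_sub_comm (σ _ _)] using h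

lemma MClose.mdist_le (h : MClose μ ε ρ σ) : mdist μ ρ σ ≤ ε := by
  obtain ⟨r, hr, hrm, hle, hint⟩ := h
  refine le_trans (sInf_le ?_) hint
  exact ⟨r, hr, hrm, Eventually.of_forall fun p => hle p.1 p.2, rfl⟩

lemma MClose.onFun [SFinite μ] (h : MClose μ ε ρ σ) {T : X → X}
    (hT : MeasurePreserving T μ μ) : MClose μ ε (ρ on T) (σ on T) := by
  obtain ⟨r, hr, hrm, hle, hint⟩ := h
  refine ⟨r on T, hr.onFun T, hrm.comp (hT.measurable.prodMap hT.measurable),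
    fun x y => hle _ _, ?_⟩
  exact ((hT.prod hT).lintegral_comp (f := fun p => ENNReal.ofReal (r p.1 p.2))
    hrm.ennreal_ofReal).trans_le hint

lemma MClose.sum_mul {ι : Type*} [Fintype ι] {ρ σ : ι → X → X → ℝ} {w : ι → ℝ}
    (h : ∀ i, MClose μ ε (ρ i) (σ i)) (hw : ∀ i, 0 ≤ w i) (hw1 : ∑ i, w i = 1) :
    MClose μ ε (fun x y => ∑ i, w i * ρ i x y) fun x y => ∑ i, w i * σ i x y := by
  choose r hr hrm hle hint using h
  have hrm' (i : ι) : Measurable fun p : X × X => ENNReal.ofReal (r i p.1 p.2) :=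
    (hrm i).ennreal_ofReal
  refine ⟨fun x y => ∑ i, w i * r i x y, isSemimetric_sum_mul hw hr,
    Finset.measurable_fun_sum _ fun i _ => (hrm i).const_mul (w i), fun x y => ?_, ?_⟩
  · calc |∑ i, w i * ρ i x y - ∑ i, w i * σ i x y|
        = |∑ i, w i * (ρ i x y - σ i x y)| := by simp only [mul_sub, Finset.sum_sub_distrib]
      _ ≤ ∑ i, |w i * (ρ i x y - σ i x y)| := Finset.abs_sum_le_sum_abs _ _
      _ ≤ ∑ i, w i * r i x y := Finset.sum_le_sum fun i _ => by
          rw [abs_mul, abs_of_nonneg (hw i)]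
          exact mul_le_mul_of_nonneg_left (hle i x y) (hw i)
  · calc ∫⁻ p, ENNReal.ofReal (∑ i, w i * r i p.1 p.2) ∂(μ.prod μ)
        = ∫⁻ p, ∑ i, ENNReal.ofReal (w i) * ENNReal.ofReal (r i p.1 p.2) ∂(μ.prod μ) := by
          refine lintegral_congr fun p => ?_
          rw [ENNReal.ofReal_sum_of_nonneg fun i _ => mul_nonneg (hw i) ((hr i).1 _ _)]
          simp only [ENNReal.ofReal_mul (hw _)]
      _ = ∑ i, ENNReal.ofReal (w i) * ∫⁻ p, ENNReal.ofReal (r i p.1 p.2) ∂(μ.prod μ) := by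
          rw [lintegral_finsetSum _ fun i _ => (hrm' i).const_mul _]
          simp only [lintegral_const_mul' _ _ ENNReal.ofReal_ne_top]
      _ ≤ ∑ i, ENNReal.ofReal (w i) * ε := Finset.sum_le_sum fun i _ => by gcongr; exact hint i
      _ = ε := by
          rw [← Finset.sum_mul, ← ENNReal.ofReal_sum_of_nonneg fun i _ => hw i, hw1,
            ENNReal.ofReal_one, one_mul]

lemma IsEpsCover.of_mClose [IsProbabilityMeasure μ] {ε : ℝ} {k : ℕ} (h : IsEpsCover μ σ ε k)
    (hτ : MClose μ (ENNReal.ofReal ε ^ 2) τ σ) : IsEpsCover μ τ (3 * ε) k := by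
  obtain ⟨B, hB, hB0, hBdiam⟩ := isEpsCover_iff.1 h
  obtain ⟨r, hr, hrm, hle, hint⟩ := hτ
  have hε : 0 < ENNReal.ofReal ε := pos_of_gt hB0
  have hrm' : Measurable fun p : X × X => ENNReal.ofReal (r p.1 p.2) := hrm.ennreal_ofReal
  rw [lintegral_prod _ hrm'.aemeasurable] at hint
  obtain ⟨x₀, hx₀⟩ := exists_le_lintegral (μ := μ)
    (hrm'.lintegral_prod_right' (ν := μ)).aemeasurable
  have hrx₀ : Measurable (r x₀) := hrm.comp measurable_prodMk_left
  let G : Set X := {z | r x₀ z < ε}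
  have hG : MeasurableSet G := measurableSet_lt hrx₀ measurable_const
  have hμG : μ Gᶜ ≤ ENNReal.ofReal ε := by
    refine (ENNReal.mul_le_mul_iff_right hε.ne' ENNReal.ofReal_ne_top).1 ?_
    calc ENNReal.ofReal ε * μ Gᶜ
        ≤ ENNReal.ofReal ε * μ {z | ENNReal.ofReal ε ≤ ENNReal.ofReal (r x₀ z)} := by
          gcongr
          exact fun z hz => ENNReal.ofReal_le_ofReal (not_lt.1 hz)
      _ ≤ ∫⁻ z, ENNReal.ofReal (r x₀ z) ∂μ := mul_meas_ge_le_lintegral hrx₀.ennreal_ofReal _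
      _ ≤ ENNReal.ofReal ε * ENNReal.ofReal ε := sq (ENNReal.ofReal ε) ▸ hx₀.trans hint
  refine isEpsCover_iff.2 ⟨fun i => B i ∩ G, fun i => (hB i).inter hG, ?_, ?_⟩
  · have hε' : 0 < ε := ENNReal.ofReal_pos.1 hε
    calc μ (⋃ i, B i ∩ G)ᶜ ≤ μ (⋃ i, B i)ᶜ + μ Gᶜ := by
          rw [← iUnion_inter, compl_inter]
          exact measure_union_le _ _
      _ < ENNReal.ofReal ε + ENNReal.ofReal ε :=
          ENNReal.add_lt_add_of_lt_of_le (measure_ne_top μ _) hB0 hμG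
      _ ≤ ENNReal.ofReal (3 * ε) := by
          rw [← ENNReal.ofReal_add hε'.le hε'.le]
          exact ENNReal.ofReal_le_ofReal (by linarith)
  · rintro i x ⟨hx, hxG⟩ y ⟨hy, hyG⟩
    have hτσ := (abs_le.1 (hle x y)).2
    have hrxy := hr.2.2.2 x x₀ y
    rw [hr.2.2.1 x x₀] at hrxy
    linarith [hBdiam i x hx y hy, show r x₀ x < ε from hxG, show r x₀ y < ε from hyG]

end MClose

section Cone

variable {X : Type*} {s : X → X → ℝ} {g : X → ℝ≥0∞}

/-- The semimetric `s` after adding shortcuts through an apex at distance `g x` from each `x`. -/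
noncomputable def coneSemimetric (s : X → X → ℝ) (g : X → ℝ≥0∞) (x y : X) : ℝ :=
  (min (ENNReal.ofReal (s x y)) (g x + g y)).toReal

lemma ofReal_coneSemimetric (x y : X) :
    ENNReal.ofReal (coneSemimetric s g x y) = min (ENNReal.ofReal (s x y)) (g x + g y) :=
  ENNReal.ofReal_toReal (ne_top_of_le_ne_top ENNReal.ofReal_ne_top (min_le_left _ _))

lemma isSemimetric_coneSemimetric (hs : IsSemimetric s)
    (hg : ∀ x y, g x ≤ ENNReal.ofReal (s x y) + g y) : IsSemimetric (coneSemimetric s g) := by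
  have hnonneg (x y : X) : 0 ≤ coneSemimetric s g x y := ENNReal.toReal_nonneg
  refine ⟨hnonneg, fun x => by simp [coneSemimetric, hs.2.1 x],
    fun x y => by simp only [coneSemimetric, hs.2.2.1 x y, add_comm (g x)], fun x y z => ?_⟩
  rw [← ENNReal.ofReal_le_ofReal_iff (add_nonneg (hnonneg x y) (hnonneg y z)),
    ENNReal.ofReal_add (hnonneg x y) (hnonneg y z)]
  simp only [ofReal_coneSemimetric]
  rcases min_choice (ENNReal.ofReal (s x y)) (g x + g y) with hxy | hxy <;>
    rcases min_choice (ENNReal.ofReal (s y z)) (g y + g z) with hyz | hyz <;>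
    rw [hxy, hyz]
  · refine (min_le_left _ _).trans ?_
    rw [← ENNReal.ofReal_add (hs.1 x y) (hs.1 y z)]
    exact ENNReal.ofReal_le_ofReal (hs.2.2.2 x y z)
  · refine (min_le_right _ _).trans ?_
    rw [← add_assoc]
    exact add_le_add_left (hg x y) _
  · refine (min_le_right _ _).trans ?_
    rw [add_assoc, add_comm (g y), ← hs.2.2.1 z y]
    exact add_le_add_right (hg z y) _
  · refine (min_le_right _ _).trans (add_le_add ?_ ?_)
    exacts [le_self_add, le_add_self]

variable [MeasurableSpace X] {μ : Measure X}

lemma measurable_coneSemimetric (hs : Measurable (uncurry s)) (hg : Measurable g) :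
    Measurable (uncurry (coneSemimetric s g)) :=
  (hs.ennreal_ofReal.min ((hg.comp measurable_fst).add (hg.comp measurable_snd))).ennreal_toReal

lemma lintegral_coneSemimetric_le [IsProbabilityMeasure μ] (hg : Measurable g) :
    ∫⁻ p, ENNReal.ofReal (coneSemimetric s g p.1 p.2) ∂(μ.prod μ) ≤ 2 * ∫⁻ x, g x ∂μ := by
  calc ∫⁻ p, ENNReal.ofReal (coneSemimetric s g p.1 p.2) ∂(μ.prod μ)
      ≤ ∫⁻ p, g p.1 + g p.2 ∂(μ.prod μ) :=
        lintegral_mono fun p => (ofReal_coneSemimetric p.1 p.2).trans_le (min_le_right _ _)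
    _ = ∫⁻ p, g p.1 ∂(μ.prod μ) + ∫⁻ p, g p.2 ∂(μ.prod μ) :=
        lintegral_add_left (hg.comp measurable_fst) _
    _ = 2 * ∫⁻ x, g x ∂μ := by
        rw [measurePreserving_fst.lintegral_comp hg, measurePreserving_snd.lintegral_comp hg,
          two_mul]

end Cone

section MeanDist

variable {X : Type*} [MeasurableSpace X] {μ : Measure X} {ρ σ s : X → X → ℝ}

/-- The mean distance from `x` to a point chosen according to `P`. -/
noncomputable def meanDist (P : Measure X) (s : X → X → ℝ) (x : X) : ℝ≥0∞ :=
  ∫⁻ z, ENNReal.ofReal (s x z) ∂P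

lemma measurable_meanDist {P : Measure X} [SFinite P] (hs : Measurable (uncurry s)) :
    Measurable (meanDist P s) :=
  (hs.ennreal_ofReal : Measurable fun p : X × X => ENNReal.ofReal (s p.1 p.2)).lintegral_prod_right'

lemma meanDist_le_add {P : Measure X} [IsProbabilityMeasure P] (hs : IsSemimetric s) (x y : X) :
    meanDist P s x ≤ ENNReal.ofReal (s x y) + meanDist P s y := by
  calc meanDist P s x ≤ ∫⁻ z, ENNReal.ofReal (s x y) + ENNReal.ofReal (s y z) ∂P := by
        refine lintegral_mono fun z => ?_
        rw [← ENNReal.ofReal_add (hs.1 x y) (hs.1 y z)]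
        exact ENNReal.ofReal_le_ofReal (hs.2.2.2 x y z)
    _ = ENNReal.ofReal (s x y) + meanDist P s y := by
        rw [lintegral_add_left measurable_const, lintegral_const, measure_univ, mul_one, meanDist]

lemma exists_isProbabilityMeasure_le_smul [IsProbabilityMeasure μ] {A : Set X}
    (hA : MeasurableSet A) :
    ∃ (P : Measure X) (K : NNReal), IsProbabilityMeasure P ∧ P ≤ K • μ ∧
      (μ A ≠ 0 → ∀ᵐ z ∂P, z ∈ A) := by
  rcases eq_or_ne (μ A) 0 with h0 | h0
  · exact ⟨μ, 1, inferInstance, by rw [one_smul], absurd h0⟩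
  · refine ⟨ProbabilityTheory.cond μ A, (μ A)⁻¹.toNNReal,
      ProbabilityTheory.cond_isProbabilityMeasure h0, ?_,
      fun _ => ProbabilityTheory.ae_cond_mem hA⟩
    change _ ≤ ((μ A)⁻¹.toNNReal : ℝ≥0∞) • μ
    rw [ENNReal.coe_toNNReal (ENNReal.inv_ne_top.2 h0), ProbabilityTheory.cond]
    gcongr
    exact Measure.restrict_le_self

lemma IsEpsCover.exists_ae_iInf_meanDist_le [IsProbabilityMeasure μ] {ε : ℝ} {k : ℕ}
    (h : IsEpsCover μ ρ ε k) :
    ∃ (A : Set X) (P : Fin (k + 1) → Measure X) (K : NNReal), MeasurableSet A ∧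
      μ A < ENNReal.ofReal ε ∧ (∀ i, IsProbabilityMeasure (P i)) ∧ (∀ i, P i ≤ K • μ) ∧
      ∀ᵐ x ∂μ, ⨅ i, meanDist (P i) ρ x ≤ ENNReal.ofReal ε + A.indicator (meanDist μ ρ) x := by
  obtain ⟨B, hB, hB0, hdiam⟩ := isEpsCover_iff.1 h
  choose P K hP hPK hPB using fun i => exists_isProbabilityMeasure_le_smul (μ := μ) (hB i)
  let Q : Fin (k + 1) → Measure X := Fin.cons μ P
  have hKle (L : NNReal) (hL : L ≤ 1 + ∑ i, K i) : L • μ ≤ (1 + ∑ i, K i) • μ := by gcongr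
  refine ⟨(⋃ i, B i)ᶜ, Q, 1 + ∑ i, K i, (MeasurableSet.iUnion hB).compl, hB0,
    Fin.cases ‹IsProbabilityMeasure μ› hP, ?_, ?_⟩
  · refine Fin.cases ((one_smul NNReal μ).ge.trans (hKle 1 le_self_add)) fun i => ?_
    exact (hPK i).trans (hKle _ <| (Finset.single_le_sum_of_canonicallyOrdered
      (Finset.mem_univ i)).trans le_add_self)
  have hpos : ∀ᵐ x ∂μ, ∀ i, x ∈ B i → μ (B i) ≠ 0 := ae_all_iff.2 fun i => by
    by_cases h0 : μ (B i) = 0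
    · filter_upwards [measure_eq_zero_iff_ae_notMem.1 h0] with x hx hxB using absurd hxB hx
    · exact Eventually.of_forall fun _ _ => h0
  filter_upwards [hpos] with x hx
  by_cases hxB : x ∈ ⋃ i, B i
  · obtain ⟨i, hi⟩ := mem_iUnion.1 hxB
    calc ⨅ i, meanDist (Q i) ρ x ≤ meanDist (P i) ρ x := iInf_le _ i.succ
      _ ≤ ∫⁻ _, ENNReal.ofReal ε ∂(P i) := by
          refine lintegral_mono_ae ?_
          filter_upwards [hPB i (hx i hi)] with z hz
          exact ENNReal.ofReal_le_ofReal (hdiam i x hi z hz).le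
      _ = ENNReal.ofReal ε := by rw [lintegral_const, measure_univ, mul_one]
      _ ≤ _ := le_self_add
  · rw [indicator_of_mem (mem_compl hxB)]
    exact (iInf_le _ 0).trans le_add_self

lemma HasFiniteEntropy.exists_lintegral_iInf_meanDist_le [IsProbabilityMeasure μ]
    (h : HasFiniteEntropy μ ρ) (hint : Integrable (uncurry ρ) (μ.prod μ)) {η : ℝ≥0∞}
    (hη : η ≠ 0) :
    ∃ (k : ℕ) (P : Fin k → Measure X) (K : NNReal), (∀ i, IsProbabilityMeasure (P i)) ∧
      (∀ i, P i ≤ K • μ) ∧ ∫⁻ x, ⨅ i, meanDist (P i) ρ x ∂μ ≤ η := by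
  have hmean : ∫⁻ x, meanDist μ ρ x ∂μ ≠ ∞ :=
    (lintegral_prod _ hint.aemeasurable.ennreal_ofReal).symm.trans_ne hint.lintegral_lt_top.ne
  have hη2 : 0 < η / 2 := ENNReal.half_pos hη
  obtain ⟨δ, hδ, hsmall⟩ := exists_pos_setLIntegral_lt_of_measure_lt hmean hη2.ne'
  obtain ⟨ε, hε, hεlt⟩ := ENNReal.lt_iff_exists_nnreal_btwn.1 (lt_min hδ hη2)
  obtain ⟨k, hk⟩ := h ε (by exact_mod_cast hε)
  obtain ⟨A, P, K, hA, hμA, hP, hPK, hbound⟩ := hk.exists_ae_iInf_meanDist_le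
  rw [ENNReal.ofReal_coe_nnreal] at hμA hbound
  refine ⟨k + 1, P, K, hP, hPK, ?_⟩
  calc ∫⁻ x, ⨅ i, meanDist (P i) ρ x ∂μ
      ≤ ∫⁻ x, ε + A.indicator (meanDist μ ρ) x ∂μ := lintegral_mono_ae hbound
    _ = ε + ∫⁻ x in A, meanDist μ ρ x ∂μ := by
        rw [lintegral_add_left measurable_const, lintegral_const, measure_univ, mul_one,
          lintegral_indicator hA]
    _ ≤ η / 2 + η / 2 :=
        add_le_add (hεlt.le.trans (min_le_right _ _))
          (hsmall A (hμA.trans (hεlt.trans_le (min_le_left _ _)))).le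
    _ = η := ENNReal.add_halves η

end MeanDist

section Approximation

variable {X : Type*} {ρ σ : X → X → ℝ}

lemma ofReal_abs_sub_le_add (hρ : IsSemimetric ρ) (hσ : IsSemimetric σ) (x y z w : X) :
    ENNReal.ofReal |σ x y - ρ x y| ≤ ENNReal.ofReal (ρ x z + σ x z) +
      (ENNReal.ofReal (ρ y w + σ y w) + ENNReal.ofReal |σ z w - ρ z w|) := by
  have hxz := add_nonneg (hρ.1 x z) (hσ.1 x z)
  have hyw := add_nonneg (hρ.1 y w) (hσ.1 y w)
  have hzw := abs_nonneg (σ z w - ρ z w)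
  rw [← ENNReal.ofReal_add hyw hzw, ← ENNReal.ofReal_add hxz (add_nonneg hyw hzw)]
  refine ENNReal.ofReal_le_ofReal (abs_le.2 ⟨?_, ?_⟩)
  · linarith [neg_abs_le (σ z w - ρ z w), hρ.2.2.2 x z y, hρ.2.2.2 z w y, hρ.2.2.1 w y,
      hσ.2.2.2 z x w, hσ.2.2.2 x y w, hσ.2.2.1 z x]
  · linarith [le_abs_self (σ z w - ρ z w), hσ.2.2.2 x z y, hσ.2.2.2 z w y, hσ.2.2.1 w y,
      hρ.2.2.2 z x w, hρ.2.2.2 x y w, hρ.2.2.1 z x]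

variable [MeasurableSpace X] {μ : Measure X}

lemma ofReal_abs_sub_le_meanDist_add [SFinite μ] {P Q : Measure X} {K : NNReal}
    [IsProbabilityMeasure P] [IsProbabilityMeasure Q] (hP : P ≤ K • μ) (hQ : Q ≤ K • μ)
    (hρ : IsSemimetric ρ) (hσ : IsSemimetric σ) (hρm : Measurable (uncurry ρ))
    (hσm : Measurable (uncurry σ)) (x y : X) :
    ENNReal.ofReal |σ x y - ρ x y| ≤ meanDist P (ρ + σ) x +
      (meanDist Q (ρ + σ) y + K ^ 2 * L1dist μ σ ρ) := by
  let d (z w : X) : ℝ≥0∞ := ENNReal.ofReal |σ z w - ρ z w|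
  have hd : Measurable fun p : X × X => d p.1 p.2 := (hσm.sub hρm).abs.ennreal_ofReal
  have hs : Measurable (uncurry (ρ + σ)) := hρm.add hσm
  have hsy (y : X) : Measurable fun w => ENNReal.ofReal ((ρ + σ) y w) :=
    (hs.comp measurable_prodMk_left).ennreal_ofReal
  have hKd : ∫⁻ z, ∫⁻ w, d z w ∂Q ∂P ≤ K ^ 2 * L1dist μ σ ρ := by
    calc ∫⁻ z, ∫⁻ w, d z w ∂Q ∂P ≤ ∫⁻ z, ∫⁻ w, d z w ∂(K • μ) ∂(K • μ) :=
          lintegral_mono' hP fun z => lintegral_mono' hQ le_rfl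
      _ = K ^ 2 * ∫⁻ z, ∫⁻ w, d z w ∂μ ∂μ := by
          simp only [lintegral_smul_measure, ENNReal.smul_def, smul_eq_mul]
          rw [lintegral_const_mul' _ _ ENNReal.coe_ne_top, ← mul_assoc, sq]
      _ = K ^ 2 * L1dist μ σ ρ := by rw [L1dist, lintegral_prod _ hd.aemeasurable]
  calc d x y = ∫⁻ _, ∫⁻ _, d x y ∂Q ∂P := by simp
    _ ≤ ∫⁻ z, ∫⁻ w, ENNReal.ofReal ((ρ + σ) x z) +
          (ENNReal.ofReal ((ρ + σ) y w) + d z w) ∂Q ∂P :=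
        lintegral_mono fun z => lintegral_mono fun w => ofReal_abs_sub_le_add hρ hσ x y z w
    _ = ∫⁻ z, ENNReal.ofReal ((ρ + σ) x z) +
          (meanDist Q (ρ + σ) y + ∫⁻ w, d z w ∂Q) ∂P := by
        refine lintegral_congr fun z => ?_
        rw [lintegral_add_left measurable_const, lintegral_add_left (hsy y), lintegral_const,
          measure_univ, mul_one, meanDist]
    _ = meanDist P (ρ + σ) x + (meanDist Q (ρ + σ) y + ∫⁻ z, ∫⁻ w, d z w ∂Q ∂P) := by
        rw [lintegral_add_left (hsy x), lintegral_add_left measurable_const, lintegral_const,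
          measure_univ, mul_one]
        rfl
    _ ≤ _ := by gcongr

lemma meanDist_add_le {P : Measure X} {K : NNReal} (hP : P ≤ K • μ) (hρ : IsSemimetric ρ)
    (hρm : Measurable (uncurry ρ)) (x : X) :
    meanDist P (ρ + σ) x ≤
      2 * meanDist P ρ x + K * ∫⁻ z, ENNReal.ofReal |σ x z - ρ x z| ∂μ := by
  have hρx : Measurable fun z => ENNReal.ofReal (ρ x z) :=
    (hρm.comp measurable_prodMk_left).ennreal_ofReal
  calc meanDist P (ρ + σ) x
      ≤ ∫⁻ z, 2 * ENNReal.ofReal (ρ x z) + ENNReal.ofReal |σ x z - ρ x z| ∂P := by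
        refine lintegral_mono fun z => ?_
        rw [two_mul, ← ENNReal.ofReal_add (hρ.1 x z) (hρ.1 x z),
          ← ENNReal.ofReal_add (add_nonneg (hρ.1 x z) (hρ.1 x z)) (abs_nonneg _)]
        refine ENNReal.ofReal_le_ofReal ?_
        linarith [le_abs_self (σ x z - ρ x z), show (ρ + σ) x z = ρ x z + σ x z from rfl]
    _ = 2 * meanDist P ρ x + ∫⁻ z, ENNReal.ofReal |σ x z - ρ x z| ∂P := by
        rw [lintegral_add_left (hρx.const_mul 2), lintegral_const_mul 2 hρx, meanDist]
    _ ≤ 2 * meanDist P ρ x + K * ∫⁻ z, ENNReal.ofReal |σ x z - ρ x z| ∂μ := by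
        gcongr
        exact (lintegral_mono' hP le_rfl).trans_eq (lintegral_smul_measure _ _)

lemma lintegral_iInf_meanDist_add_le [SFinite μ] {ι : Type*} [Countable ι] {P : ι → Measure X}
    [∀ i, SFinite (P i)] {K : NNReal} (hPK : ∀ i, P i ≤ K • μ) (hρ : IsSemimetric ρ)
    (hρm : Measurable (uncurry ρ)) (hσm : Measurable (uncurry σ)) :
    ∫⁻ x, ⨅ i, meanDist (P i) (ρ + σ) x ∂μ ≤
      2 * ∫⁻ x, ⨅ i, meanDist (P i) ρ x ∂μ + K * L1dist μ σ ρ := by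
  have hd : Measurable fun p : X × X => ENNReal.ofReal |σ p.1 p.2 - ρ p.1 p.2| :=
    (hσm.sub hρm).abs.ennreal_ofReal
  have hinf : Measurable fun x => ⨅ i, meanDist (P i) ρ x :=
    .iInf fun i => measurable_meanDist hρm
  calc ∫⁻ x, ⨅ i, meanDist (P i) (ρ + σ) x ∂μ
      ≤ ∫⁻ x, 2 * (⨅ i, meanDist (P i) ρ x) +
          K * ∫⁻ z, ENNReal.ofReal |σ x z - ρ x z| ∂μ ∂μ := by
        refine lintegral_mono fun x => ?_
        rw [ENNReal.mul_iInf_of_ne two_ne_zero ENNReal.ofNat_ne_top, ENNReal.iInf_add]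
        exact iInf_mono fun i => meanDist_add_le (hPK i) hρ hρm x
    _ = 2 * ∫⁻ x, ⨅ i, meanDist (P i) ρ x ∂μ + K * L1dist μ σ ρ := by
        rw [lintegral_add_left (hinf.const_mul 2), lintegral_const_mul 2 hinf,
          lintegral_const_mul' _ _ ENNReal.coe_ne_top, L1dist, lintegral_prod _ hd.aemeasurable]

lemma mClose_of_le_smul [IsProbabilityMeasure μ] {ι : Type*} [Countable ι] {P : ι → Measure X}
    [∀ i, IsProbabilityMeasure (P i)] {K : NNReal} (hPK : ∀ i, P i ≤ K • μ)
    (hρ : IsSemimetric ρ) (hσ : IsSemimetric σ) (hρm : Measurable (uncurry ρ))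
    (hσm : Measurable (uncurry σ)) :
    MClose μ (4 * ∫⁻ x, ⨅ i, meanDist (P i) ρ x ∂μ + 2 * (K + K ^ 2) * L1dist μ σ ρ) σ ρ := by
  let s : X → X → ℝ := ρ + σ
  let L : ℝ≥0∞ := K ^ 2 * L1dist μ σ ρ
  let g (x : X) : ℝ≥0∞ := (⨅ i, meanDist (P i) s x) + L
  have hs : IsSemimetric s := hρ.add hσ
  have hsm : Measurable (uncurry s) := hρm.add hσm
  have hinfm : Measurable fun x => ⨅ i, meanDist (P i) s x :=
    .iInf fun i => measurable_meanDist hsm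
  have hgm : Measurable g := hinfm.add_const L
  have hglip (x y : X) : g x ≤ ENNReal.ofReal (s x y) + g y := by
    rw [← add_assoc, ENNReal.add_iInf]
    exact add_le_add_left (iInf_mono fun i => meanDist_le_add hs x y) L
  have hdiff (x y : X) : ENNReal.ofReal |σ x y - ρ x y| ≤ g x + g y := by
    calc ENNReal.ofReal |σ x y - ρ x y|
        ≤ (⨅ i, meanDist (P i) s x) + ((⨅ j, meanDist (P j) s y) + L) := by
          simp only [ENNReal.iInf_add, ENNReal.add_iInf]
          exact le_iInf fun j => le_iInf fun i =>
            ofReal_abs_sub_le_meanDist_add (hPK i) (hPK j) hρ hσ hρm hσm x y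
      _ ≤ g x + g y := by gcongr; exact le_self_add
  refine ⟨coneSemimetric s g, isSemimetric_coneSemimetric hs hglip,
    measurable_coneSemimetric hsm hgm, fun x y => ?_, ?_⟩
  · have hle : |σ x y - ρ x y| ≤ ρ x y + σ x y :=
      abs_sub_le_iff.2 ⟨by linarith [hρ.1 x y], by linarith [hσ.1 x y]⟩
    have hnonneg := (isSemimetric_coneSemimetric hs hglip).1 x y
    rw [← ENNReal.ofReal_le_ofReal_iff hnonneg, ofReal_coneSemimetric]
    exact le_min (ENNReal.ofReal_le_ofReal hle) (hdiff x y)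
  · calc ∫⁻ p, ENNReal.ofReal (coneSemimetric s g p.1 p.2) ∂(μ.prod μ)
        ≤ 2 * ∫⁻ x, g x ∂μ := lintegral_coneSemimetric_le hgm
      _ = 2 * (∫⁻ x, ⨅ i, meanDist (P i) s x ∂μ + L) := by
          rw [lintegral_add_left hinfm, lintegral_const, measure_univ, mul_one]
      _ ≤ 2 * (2 * ∫⁻ x, ⨅ i, meanDist (P i) ρ x ∂μ + K * L1dist μ σ ρ + L) := by
          gcongr
          exact lintegral_iInf_meanDist_add_le hPK hρ hρm hσm
      _ = _ := by ring

theorem exists_mClose_of_L1dist_lt [IsProbabilityMeasure μ] (hρ : IsSemimetric ρ)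
    (hρm : Measurable (uncurry ρ)) (hint : Integrable (uncurry ρ) (μ.prod μ))
    (hent : HasFiniteEntropy μ ρ) {ε : ℝ≥0∞} (hε : ε ≠ 0) :
    ∃ δ : ℝ≥0∞, 0 < δ ∧ ∀ σ : X → X → ℝ, IsSemimetric σ → Measurable (uncurry σ) →
      L1dist μ σ ρ < δ → MClose μ ε σ ρ := by
  have hη0 : ε / 2 / 4 ≠ 0 := (ENNReal.div_pos (ENNReal.half_pos hε).ne' (by finiteness)).ne'
  obtain ⟨k, P, K, hP, hPK, hη⟩ := hent.exists_lintegral_iInf_meanDist_le hint hη0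
  obtain ⟨δ, hδ, hKδ⟩ := ENNReal.exists_nnreal_pos_mul_lt (a := 2 * (K + K ^ 2)) (b := ε / 2)
    (by finiteness) (ENNReal.half_pos hε).ne'
  refine ⟨δ, by exact_mod_cast hδ, fun σ hσ hσm hlt =>
    (mClose_of_le_smul hPK hρ hσ hρm hσm).mono ?_⟩
  calc 4 * ∫⁻ x, ⨅ i, meanDist (P i) ρ x ∂μ + 2 * (K + K ^ 2) * L1dist μ σ ρ
      ≤ 4 * (ε / 2 / 4) + 2 * (K + K ^ 2) * δ := by gcongr
    _ ≤ ε / 2 + ε / 2 := add_le_add (ENNReal.mul_div_cancel (by simp) (by simp)).le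
        ((mul_comm _ _).trans_le hKδ.le)
    _ = ε := ENNReal.add_halves ε

end Approximation

section Orbit

lemma totallyBoundedIn_of_finite_net {X ι : Type*} {d : (X → X → ℝ) → (X → X → ℝ) → ℝ≥0∞}
    {u : ι → X → X → ℝ}
    (h : ∀ ε : ℝ≥0∞, 0 < ε → ∃ s : Set ι, s.Finite ∧ ∀ i, ∃ j ∈ s, d (u i) (u j) < ε) :
    TotallyBoundedIn d {σ | ∃ i, σ = u i} := by
  intro ε hε
  obtain ⟨s, hs, hnet⟩ := h ε hε
  refine ⟨u '' s, hs.image u, ?_⟩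
  rintro _ ⟨i, rfl⟩
  obtain ⟨j, hj, hij⟩ := hnet i
  exact ⟨u j, mem_image_of_mem u hj, hij⟩

variable {X : Type*} [MeasurableSpace X] {μ : Measure X} {ρ : X → X → ℝ} {T : X → X}

lemma epsEntropy_le_of_isEpsCover {ε : ℝ} {k : ℕ} (h : IsEpsCover μ ρ ε k) :
    epsEntropy μ ρ ε ≤ ENNReal.ofReal (Real.logb 2 k) :=
  sInf_le ⟨k, h, rfl⟩

lemma exists_isEpsCover_sum_mul [IsProbabilityMeasure μ] {ι : Type*} {ρ : ι → X → X → ℝ}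
    (hρ : ∀ i, IsSemimetric (ρ i)) (hent : ∀ i, HasFiniteEntropy μ (ρ i)) {ε : ℝ} (hε : 0 < ε)
    {s : Set ι} (hs : s.Finite)
    (hclose : ∀ i, ∃ j ∈ s, MClose μ (ENNReal.ofReal ε ^ 2) (ρ i) (ρ j)) :
    ∃ N : ℕ, ∀ (κ : Type*) [Fintype κ] (w : κ → ℝ) (j : κ → ι), (∀ i, 0 ≤ w i) →
      ∑ i, w i = 1 → IsEpsCover μ (fun x y => ∑ i, w i * ρ (j i) x y) (3 * ε) N := by
  choose rep hrep hclose using hclose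
  obtain ⟨N, hN⟩ := hasFiniteEntropy_sum hs.toFinset (fun i _ => hent i) ε hε
  refine ⟨N, fun κ _ w j hw hw1 => ?_⟩
  refine IsEpsCover.of_mClose ?_ (MClose.sum_mul (fun i => hclose (j i)) hw hw1)
  refine hN.mono fun x y => ?_
  calc ∑ i, w i * ρ (rep (j i)) x y ≤ ∑ i, w i * ∑ k ∈ hs.toFinset, ρ k x y :=
        Finset.sum_le_sum fun i _ => mul_le_mul_of_nonneg_left
          (Finset.single_le_sum (fun k _ => (hρ k).1 x y) (hs.mem_toFinset.2 (hrep _))) (hw i)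
    _ = ∑ k ∈ hs.toFinset, ρ k x y := by rw [← Finset.sum_mul, hw1, one_mul]

lemma exists_mClose_iterate_of_L1dist_lt [IsProbabilityMeasure μ] (hT : MeasurePreserving T μ μ)
    (hρ : IsSemimetric ρ) (hρm : Measurable (uncurry ρ))
    (hint : Integrable (uncurry ρ) (μ.prod μ)) (hent : HasFiniteEntropy μ ρ) {ε : ℝ≥0∞}
    (hε : ε ≠ 0) :
    ∃ δ : ℝ≥0∞, 0 < δ ∧ ∀ n k, L1dist μ (ρ on T^[n]) (ρ on T^[k]) < δ →
      MClose μ ε (ρ on T^[n]) (ρ on T^[k]) := by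
  obtain ⟨δ, hδ, hclose⟩ := exists_mClose_of_L1dist_lt hρ hρm hint hent hε
  refine ⟨δ, hδ, fun n k hnk => ?_⟩
  wlog hkn : k ≤ n generalizing n k
  · exact (this k n (L1dist_comm (ρ on T^[n]) _ ▸ hnk) (le_of_not_ge hkn)).symm
  obtain ⟨m, rfl⟩ := Nat.exists_eq_add_of_le' hkn
  have hm : Measurable (uncurry (ρ on T^[m])) :=
    hρm.comp ((hT.iterate m).measurable.prodMap (hT.iterate m).measurable)
  have hshift : (ρ on T^[m + k]) = ((ρ on T^[m]) on T^[k]) := by rw [iterate_add]; rfl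
  rw [hshift] at hnk ⊢
  rw [L1dist_onFun (hT.iterate k) hm hρm] at hnk
  exact (hclose _ (hρ.onFun _) hm hnk).onFun (hT.iterate k)

lemma exists_finite_mClose {𝕜 : Type*} [RCLike 𝕜] [IsProbabilityMeasure μ]
    (hT : MeasurePreserving T μ μ)
    (hspec : HasDiscreteSpectrum (Lp.compMeasurePreservingₗᵢ 𝕜 T hT : Lp 𝕜 2 μ →ₗᵢ[𝕜] Lp 𝕜 2 μ))
    (hρ : IsSemimetric ρ) (hρm : Measurable (uncurry ρ))
    (hint : Integrable (uncurry ρ) (μ.prod μ)) (hent : HasFiniteEntropy μ ρ) {ε : ℝ≥0∞}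
    (hε : ε ≠ 0) :
    ∃ s : Set ℕ, s.Finite ∧ ∀ n, ∃ k ∈ s, MClose μ ε (ρ on T^[n]) (ρ on T^[k]) := by
  obtain ⟨δ, hδ, hclose⟩ := exists_mClose_iterate_of_L1dist_lt hT hρ hρm hint hent hε
  obtain ⟨s, hs, hnet⟩ := exists_finite_L1dist_lt hT hspec hint hδ
  exact ⟨s, hs, fun n => (hnet n).imp fun k hk => ⟨hk.1, hclose n k hk.2⟩⟩

lemma hasDiscreteSpectrum_compMeasurePreservingₗᵢ_iff {𝕜 : Type*} [RCLike 𝕜] {p : ℝ≥0∞}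
    [Fact (1 ≤ p)] {hT : MeasurePreserving T μ μ} :
    HasDiscreteSpectrum (Lp.compMeasurePreservingₗᵢ 𝕜 T hT : Lp 𝕜 p μ →ₗᵢ[𝕜] Lp 𝕜 p μ) ↔
      Dense (Submodule.span 𝕜 {f : Lp 𝕜 p μ | ∃ c : 𝕜, ∀ᵐ x ∂μ, f (T x) = c * f x} :
        Set (Lp 𝕜 p μ)) := by
  have heq (f : Lp 𝕜 p μ) (c : 𝕜) : Lp.compMeasurePreservingₗᵢ 𝕜 T hT f = c • f ↔
      ∀ᵐ x ∂μ, f (T x) = c * f x :=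
    Lp.ext_iff.trans <|
      (Lp.coeFn_compMeasurePreserving f hT).congr_left.trans (Lp.coeFn_smul c f).congr_right
  simp only [HasDiscreteSpectrum, heq]

end Orbit

theorem statement18_general {X : Type*} [MeasurableSpace X]
    (μ : Measure X) [IsProbabilityMeasure μ] (T : X → X) (hT : MeasurePreserving T μ μ)
    (hspec : Dense ((Submodule.span ℂ
      {f : Lp ℂ 2 μ | ∃ c : ℂ, ∀ᵐ x ∂μ, f (T x) = c * f x} :
        Submodule ℂ (Lp ℂ 2 μ)) : Set (Lp ℂ 2 μ)))
    (ρ : X → X → ℝ) (hρ : IsSemimetric ρ) (hadm : Admissible μ ρ)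
    (hint : Integrable (Function.uncurry ρ) (μ.prod μ)) :
    TotallyBoundedIn (L1dist μ) {σ | ∃ n : ℕ, σ = fun x y => ρ (T^[n] x) (T^[n] y)} ∧
    TotallyBoundedIn (mdist μ) {σ | ∃ n : ℕ, σ = fun x y => ρ (T^[n] x) (T^[n] y)} ∧
    ∀ ε : ℝ, 0 < ε → ∃ C : ℝ≥0∞, C ≠ ∞ ∧
      ∀ (m : ℕ) (w : Fin m → ℝ) (j : Fin m → ℕ),
        (∀ i, 0 ≤ w i) → (∑ i, w i) = 1 →
        epsEntropy μ (fun x y => ∑ i, w i * ρ (T^[j i] x) (T^[j i] y)) ε ≤ C := by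
  have hent := hadm.hasFiniteEntropy hρ
  have hspec' := (hasDiscreteSpectrum_compMeasurePreservingₗᵢ_iff (hT := hT)).2 hspec
  have hclose {ε : ℝ≥0∞} (hε : ε ≠ 0) := exists_finite_mClose hT hspec' hρ hadm.1 hint hent hε
  refine ⟨totallyBoundedIn_of_finite_net fun ε hε => exists_finite_L1dist_lt hT hspec' hint hε,
    totallyBoundedIn_of_finite_net fun ε hε => ?_, fun ε hε => ?_⟩
  · obtain ⟨δ, hδ, hδε⟩ := exists_between hε
    obtain ⟨s, hs, hnet⟩ := hclose hδ.ne'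
    exact ⟨s, hs, fun n => (hnet n).imp fun k hk => ⟨hk.1, hk.2.mdist_le.trans_lt hδε⟩⟩
  · have hε3 : 0 < ε / 3 := by positivity
    obtain ⟨s, hs, hnet⟩ := hclose (pow_ne_zero 2 (ENNReal.ofReal_pos.2 hε3).ne')
    obtain ⟨N, hN⟩ := exists_isEpsCover_sum_mul (fun n => hρ.onFun T^[n])
      (fun n => hent.onFun (hT.iterate n)) hε3 hs hnet
    rw [mul_div_cancel₀ ε three_ne_zero] at hN
    exact ⟨_, ENNReal.ofReal_ne_top, fun m w j hw hw1 =>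
      epsEntropy_le_of_isEpsCover (hN (Fin m) w j hw hw1)⟩

/-- if an invertible measure-preserving transformation `T` of a standard
probability space has purely discrete spectrum, then for every admissible summable
semimetric `ρ` the orbit `{ρ_n : n ∈ ℕ}` with `ρ_n(x,y) = ρ(T^n x, T^n y)` is precompact
in `L¹(X×X, μ×μ)`, hence also in the m-norm; moreover, for every `ε > 0` the
`ε`-entropies of all finite convex combinations of semimetrics in this orbit are
uniformly bounded. -/
theorem statement18 {X : Type*} [MeasurableSpace X] [StandardBorelSpace X]
    (μ : Measure X) [IsProbabilityMeasure μ] (T : X → X)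
    (hT : MeasurePreserving T μ μ) (hbij : Function.Bijective T)
    (hspec : Dense ((Submodule.span ℂ
      {f : Lp ℂ 2 μ | ∃ c : ℂ, ∀ᵐ x ∂μ, f (T x) = c * f x} :
        Submodule ℂ (Lp ℂ 2 μ)) : Set (Lp ℂ 2 μ)))
    (ρ : X → X → ℝ) (hρ : IsSemimetric ρ) (hadm : Admissible μ ρ)
    (hint : Integrable (Function.uncurry ρ) (μ.prod μ)) :
    TotallyBoundedIn (L1dist μ) {σ | ∃ n : ℕ, σ = fun x y => ρ (T^[n] x) (T^[n] y)} ∧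
    TotallyBoundedIn (mdist μ) {σ | ∃ n : ℕ, σ = fun x y => ρ (T^[n] x) (T^[n] y)} ∧
    ∀ ε : ℝ, 0 < ε → ∃ C : ℝ≥0∞, C ≠ ∞ ∧
      ∀ (m : ℕ) (w : Fin m → ℝ) (j : Fin m → ℕ),
        (∀ i, 0 ≤ w i) → (∑ i, w i) = 1 →
        epsEntropy μ (fun x y => ∑ i, w i * ρ (T^[j i] x) (T^[j i] y)) ε ≤ C :=
  statement18_general μ T hT hspec ρ hρ hadm hint
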